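/- Let K be a nonempty compact subset of a finite-dimensional real inner product space (e.g., ℝⁿ) and let r ≥ 0. If for every unit vector u there exists a point p ∈ K with ⟨p, u⟩ ≥ r, then the closed ball of radius r centered at the origin is contained in the convex hull of K. -/

import Mathlib

open Metric RealInnerProductSpace

/-- In finite dimension, the convex hull of a compact set is compact. -/
theorem isCompact_convexHull_of_isCompact_aux
    {E : Type*} [NormedAddCommGroup E] [InnerProductSpace ℝ E] [FiniteDimensional ℝ E]
    (K : Set E) (hK : IsCompact K) : IsCompact (convexHull ℝ K) := by
  have key : convexHull ℝ K = ⋃ n ∈ Finset.range (Module.finrank ℝ E + 2),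
      (fun p : (Fin n → E) × (Fin n → ℝ) => ∑ i, p.2 i • p.1 i) ''
        ((Set.univ.pi fun _ => K) ×ˢ stdSimplex ℝ (Fin n)) := by
    apply Set.Subset.antisymm
    · intro x hx
      obtain ⟨ι, hι, z, w, hz, hai, hw, hw1, hx⟩ := eq_pos_convex_span_of_mem_convexHull hx
      have hcard : Fintype.card ι ≤ Module.finrank ℝ E + 1 :=
        hai.card_le_finrank_succ.trans
          (Nat.add_le_add_right (Submodule.finrank_le _) 1)
      let e := Fintype.equivFin ι
      simp only [Set.mem_iUnion]
      refine ⟨Fintype.card ι, Finset.mem_range.2 (by omega),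
        (fun i => z (e.symm i), fun i => w (e.symm i)), ⟨?_, ?_, ?_⟩, ?_⟩
      · intro i _
        exact hz ⟨_, rfl⟩
      · intro i
        exact (hw _).le
      · rw [← hw1]
        exact e.symm.sum_comp w
      · rw [← hx]
        exact e.symm.sum_comp fun i => w i • z i
    · simp only [Set.iUnion_subset_iff]
      rintro n _ _ ⟨⟨z, w⟩, ⟨hz, hw0, hw1⟩, rfl⟩
      exact (convex_convexHull ℝ K).sum_mem (fun i _ => hw0 i) hw1
        fun i _ => subset_convexHull ℝ K (hz i trivial)
  rw [key]
  refine Finset.isCompact_biUnion _ fun n _ => ?_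
  refine IsCompact.image ((isCompact_univ_pi fun _ => hK).prod (isCompact_stdSimplex ℝ _)) ?_
  fun_prop

/-- If `K` is a nonempty compact subset of a finite-dimensional real inner product space and
every unit vector `u` admits a point `p ∈ K` with `⟪p, u⟫ ≥ r` (where `r ≥ 0`), then the
closed ball of radius `r` about the origin is contained in the convex hull of `K`. -/
theorem closedBall_subset_convexHull_of_support
    {E : Type*} [NormedAddCommGroup E] [InnerProductSpace ℝ E] [FiniteDimensional ℝ E]
    (K : Set E) (hne : K.Nonempty) (hK : IsCompact K) (r : ℝ) (hr : 0 ≤ r)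
    (h : ∀ u : E, ‖u‖ = 1 → ∃ p ∈ K, r ≤ ⟪p, u⟫) :
    closedBall (0 : E) r ⊆ convexHull ℝ K := by
  intro x hx
  by_contra hxK
  obtain ⟨f, c, hfc, hcx⟩ := geometric_hahn_banach_closed_point (convex_convexHull ℝ K)
    (isCompact_convexHull_of_isCompact_aux K hK).isClosed hxK
  haveI : CompleteSpace E := FiniteDimensional.complete ℝ E
  obtain ⟨v, rfl⟩ := (InnerProductSpace.toDual ℝ E).surjective f
  simp only [InnerProductSpace.toDual_apply_apply] at hfc hcx
  have hv : v ≠ 0 := by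
    rintro rfl
    obtain ⟨k, hk⟩ := hne
    have := hfc k (subset_convexHull ℝ K hk)
    simp only [inner_zero_left] at this hcx
    linarith
  have hv0 : 0 < ‖v‖ := norm_pos_iff.2 hv
  obtain ⟨p, hp, hrp⟩ := h (‖v‖⁻¹ • v) (norm_smul_inv_norm (𝕜 := ℝ) hv)
  have h1 := hfc p (subset_convexHull ℝ K hp)
  have h2 : ⟪v, x⟫ ≤ ‖v‖ * ‖x‖ := real_inner_le_norm v x
  have h3 : ‖x‖ ≤ r := mem_closedBall_zero_iff.1 hx
  rw [real_inner_smul_right, real_inner_comm, inv_mul_eq_div, le_div_iff₀ hv0] at hrp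
  nlinarith
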